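/- Let v ∈ ℝ⁴ be a fixed vector. For every x and r > 0 such that B̄_{x'}(r) ⊆ Ω for all x' in a neighborhood of x, the function x ↦ D_φ(x,r) is differentiable in the direction v and ∂_v D_φ(x,r) = −(2/r) ∫ φ'(|y−x|/r) ⟨∂_{ν_x}u(y), ∂_v u(y)⟩ dy. -/

import Mathlib

open Metric MeasureTheory
open scoped RealInnerProductSpace

noncomputable section

abbrev E4 := EuclideanSpace ℝ (Fin 4)

variable {E : Type*} [NormedAddCommGroup E] [InnerProductSpace ℝ E] [FiniteDimensional ℝ E]

/-- `u` is smooth and harmonic (the Laplacian, i.e. the sum of the pure second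
derivatives in the coordinate directions, vanishes) on `Ω`. -/
def IsHarmonicOn (u : E4 → E) (Ω : Set E4) : Prop :=
  ContDiffOn ℝ (⊤ : ℕ∞) u Ω ∧
  ∀ x ∈ Ω, ∑ i : Fin 4,
    iteratedFDeriv ℝ 2 u x ![EuclideanSpace.single i (1:ℝ), EuclideanSpace.single i 1] = 0

/-- `|∇u(y)|²`, the squared Frobenius norm of the derivative of `u` at `y`. -/
def gradSq (u : E4 → E) (y : E4) : ℝ :=
  ∑ i : Fin 4, ‖fderiv ℝ u y (EuclideanSpace.single i (1:ℝ))‖ ^ 2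

/-- `D_φ(x,r) = ∫ |∇u(y)|² φ(|y−x|/r) dy`. -/
def Dphi (φ : ℝ → ℝ) (u : E4 → E) (x : E4) (r : ℝ) : ℝ :=
  ∫ y, gradSq u y * φ (‖y - x‖ / r)

/-- `H_φ(x,r) = −∫ |u(y)|² |y−x|⁻¹ φ'(|y−x|/r) dy`. -/
def Hphi (φ : ℝ → ℝ) (u : E4 → E) (x : E4) (r : ℝ) : ℝ :=
  -∫ y, ‖u y‖ ^ 2 * ‖y - x‖⁻¹ * deriv φ (‖y - x‖ / r)

/-- `E_φ(x,r) = −∫ |∂_{ν_x}u(y)|² |y−x| φ'(|y−x|/r) dy`, where `ν_x(y) = (y−x)/|y−x|`. -/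
def Ephi (φ : ℝ → ℝ) (u : E4 → E) (x : E4) (r : ℝ) : ℝ :=
  -∫ y, ‖fderiv ℝ u y (‖y - x‖⁻¹ • (y - x))‖ ^ 2 * ‖y - x‖ * deriv φ (‖y - x‖ / r)

/-- The smoothed frequency `N_φ(x,r) = r D_φ(x,r) / H_φ(x,r)`. -/
def Nphi (φ : ℝ → ℝ) (u : E4 → E) (x : E4) (r : ℝ) : ℝ :=
  r * Dphi φ u x r / Hphi φ u x r

/-! For compactly supported `ψ`, moving the center of `∫ |∇u|² ψ(· - x)` in the direction `v`
replaces `ψ` by `-∂_v ψ`. Where `Δu = 0`, the stress-energy identity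
`∂_v |∇u|² = 2 ∑ᵢ ∂ᵢ ⟨∂ᵢu, ∂_v u⟩` holds, so two integrations by parts turn `-∫ |∇u|² ∂_v ψ` into
`-2 ∫ ⟨∂_{∇ψ} u, ∂_v u⟩`. For the radial kernel `ψ(z) = φ(|z|/r)`, `∇ψ` is `φ'(|z|/r)/r` times the
unit radial vector. -/

open Filter InnerProductSpace Topology
open scoped Convolution Gradient

section Radial

variable {V : Type*} [NormedAddCommGroup V] [InnerProductSpace ℝ V] [CompleteSpace V] {η : ℝ → ℝ}

lemma hasGradientAt_norm {z : V} (hz : z ≠ 0) :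
    HasGradientAt (fun z : V ↦ ‖z‖) (‖z‖⁻¹ • z) z := by
  have h := (hasStrictFDerivAt_norm_sq z).hasFDerivAt.sqrt (by simp [hz])
  simp only [Real.sqrt_sq (norm_nonneg _)] at h
  refine h.congr_fderiv ?_
  ext w
  simp only [one_div, mul_inv_rev, smul_apply, innerSL_apply_apply,
    toDual_apply_apply, real_inner_smul_left, smul_eq_mul, nsmul_eq_mul, Nat.cast_ofNat]
  field_simp

lemma hasGradientAt_comp_norm (hη : Differentiable ℝ η) (hη₀ : deriv η 0 = 0) (z : V) :
    HasGradientAt (fun z : V ↦ η ‖z‖) (deriv η ‖z‖ • ‖z‖⁻¹ • z) z := by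
  rcases eq_or_ne z 0 with rfl | hz
  · have hη' : (fun t ↦ η t - η 0) =o[𝓝 0] fun t ↦ t := by
      simpa [hη₀] using (hη 0).hasDerivAt.isLittleO
    rw [hasGradientAt_iff_isLittleO]
    simpa using (hη'.comp_tendsto tendsto_norm_zero).of_norm_right
  · refine ((hη ‖z‖).hasDerivAt.comp_hasFDerivAt z (hasGradientAt_norm hz)).congr_fderiv ?_
    simp

lemma contDiff_one_comp_norm (hη : ContDiff ℝ 1 η) (hη₀ : deriv η 0 = 0) :
    ContDiff ℝ 1 fun z : V ↦ η ‖z‖ := by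
  have hgrad := hasGradientAt_comp_norm (V := V) (hη.differentiable one_ne_zero) hη₀
  have hη' : Continuous fun z : V ↦ deriv η ‖z‖ := (hη.continuous_deriv le_rfl).comp continuous_norm
  refine contDiff_one_iff_hasFDerivAt.2
    ⟨_, (toDual ℝ V).continuous.comp (continuous_iff_continuousAt.2 fun z ↦ ?_), hgrad⟩
  rcases eq_or_ne z 0 with rfl | hz
  · have hbound (z : V) : ‖deriv η ‖z‖ • ‖z‖⁻¹ • z‖ ≤ ‖deriv η ‖z‖‖ := by
      rw [norm_smul, norm_smul, norm_inv, norm_norm]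
      exact mul_le_of_le_one_right (norm_nonneg _) inv_mul_le_one
    have hlim : Tendsto (fun z : V ↦ ‖deriv η ‖z‖‖) (𝓝 0) (𝓝 0) := by
      simpa [hη₀] using hη'.norm.tendsto 0
    simpa [ContinuousAt] using squeeze_zero_norm hbound hlim
  · exact hη'.continuousAt.smul
      ((continuousAt_id.norm.inv₀ (norm_ne_zero_iff.2 hz)).smul continuousAt_id)

end Radial

section Integration

lemma integrable_mul_of_continuousOn_of_support_subset {X : Type*} [TopologicalSpace X] [T2Space X]
    [MeasurableSpace X] [OpensMeasurableSpace X] {μ : Measure X} [IsFiniteMeasureOnCompacts μ]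
    {f g : X → ℝ} {K : Set X} (hK : IsCompact K) (hf : ContinuousOn f K) (hg : ContinuousOn g K)
    (hgK : Function.support g ⊆ K) : Integrable (fun y ↦ f y * g y) μ :=
  (integrableOn_iff_integrable_of_support_subset
    ((Function.support_mul_subset_right f g).trans hgK)).1 ((hf.mul hg).integrableOn_compact hK)

variable {V : Type*} [NormedAddCommGroup V] [NormedSpace ℝ V] [MeasurableSpace V] [BorelSpace V]
  {μ : Measure V} {f g : V → ℝ}

lemma integrable_mul_fderiv_of_hasCompactSupport [IsFiniteMeasureOnCompacts μ]
    (hg : ContDiff ℝ 1 g) (hg_supp : HasCompactSupport g)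
    (hf : ContinuousOn f (tsupport g)) (v : V) :
    Integrable (fun y ↦ f y * fderiv ℝ g y v) μ :=
  integrable_mul_of_continuousOn_of_support_subset hg_supp hf
    ((hg.continuous_fderiv one_ne_zero).clm_apply continuous_const).continuousOn
    ((subset_tsupport _).trans (tsupport_fderiv_apply_subset ℝ v))

lemma integrable_fderiv_mul_of_hasCompactSupport [IsFiniteMeasureOnCompacts μ]
    (hg : Continuous g) (hg_supp : HasCompactSupport g)
    (hf : ∀ y ∈ tsupport g, ContDiffAt ℝ 1 f y) (v : V) :
    Integrable (fun y ↦ fderiv ℝ f y v * g y) μ :=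
  integrable_mul_of_continuousOn_of_support_subset hg_supp
    (fun y hy ↦ (((hf y hy).fderiv_right (m := 0) le_rfl).continuousAt.clm_apply
      continuousAt_const).continuousWithinAt) hg.continuousOn (subset_tsupport g)

variable [FiniteDimensional ℝ V] [μ.IsAddHaarMeasure]

lemma integral_mul_fderiv_eq_neg_of_hasCompactSupport (hg : ContDiff ℝ 1 g)
    (hg_supp : HasCompactSupport g) (hf : ∀ y ∈ tsupport g, ContDiffAt ℝ 1 f y) (v : V) :
    ∫ y, f y * fderiv ℝ g y v ∂μ = -∫ y, fderiv ℝ f y v * g y ∂μ := by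
  have hf_cont : ContinuousOn f (tsupport g) := fun y hy ↦ (hf y hy).continuousAt.continuousWithinAt
  exact integral_mul_fderiv_eq_neg_fderiv_mul_of_integrable
    (integrable_fderiv_mul_of_hasCompactSupport hg.continuous hg_supp hf v)
    (integrable_mul_fderiv_of_hasCompactSupport hg hg_supp hf_cont v)
    (integrable_mul_of_continuousOn_of_support_subset hg_supp hf_cont hg.continuous.continuousOn
      (subset_tsupport g))
    (fun y hy ↦ (hf y hy).differentiableAt one_ne_zero)
    (fun y _ ↦ hg.differentiable one_ne_zero y)

lemma hasLineDerivAt_integral_mul_comp_sub {ψ : V → ℝ} (hf : LocallyIntegrable f μ)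
    (hψ : ContDiff ℝ 1 ψ) (hψ_supp : HasCompactSupport ψ) (x v : V) :
    HasLineDerivAt ℝ (fun x' ↦ ∫ y, f y * ψ (y - x') ∂μ)
      (-∫ y, f y * fderiv ℝ ψ (y - x) v ∂μ) x v := by
  set ψ' : V → ℝ := fun z ↦ ψ (-z) with hψ'_def
  have hψ' : ContDiff ℝ 1 ψ' := hψ.comp contDiff_neg
  have hψ'_supp : HasCompactSupport ψ' := hψ_supp.comp_homeomorph (Homeomorph.neg V)
  have hfderiv (z : V) : fderiv ℝ ψ' z v = -fderiv ℝ ψ (-z) v := by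
    have hψ_deriv := (hψ.differentiable one_ne_zero (-z)).hasFDerivAt
    have hψ'_deriv : HasFDerivAt ψ' _ z := hψ_deriv.comp z (hasFDerivAt_id z).neg
    simp [hψ'_deriv.fderiv]
  have hderiv := (hψ'_supp.hasFDerivAt_convolution_right (.mul ℝ ℝ) hf hψ' x).hasLineDerivAt v
  rw [convolution_precompR_apply _ hf (hψ'_supp.fderiv ℝ) (hψ'.continuous_fderiv one_ne_zero)]
    at hderiv
  have hconv : f ⋆[.mul ℝ ℝ, μ] ψ' = fun x' ↦ ∫ y, f y * ψ (y - x') ∂μ := by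
    ext x'
    simp [convolution_def, hψ'_def]
  rw [hconv] at hderiv
  simpa only [convolution_def, ContinuousLinearMap.mul_apply', hfderiv, neg_sub, mul_neg,
    integral_neg] using hderiv

lemma hasLineDerivAt_integral_mul_comp_sub_of_locallyIntegrableOn {ψ : V → ℝ} {Ω : Set V} {x : V}
    (hΩ : IsOpen Ω) (hf : LocallyIntegrableOn f Ω μ) (hψ : ContDiff ℝ 1 ψ)
    (hψ_supp : HasCompactSupport ψ) (hψΩ : tsupport (fun y ↦ ψ (y - x)) ⊆ Ω) (v : V) :
    HasLineDerivAt ℝ (fun x' ↦ ∫ y, f y * ψ (y - x') ∂μ)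
      (-∫ y, f y * fderiv ℝ ψ (y - x) v ∂μ) x v := by
  set K := tsupport fun y ↦ ψ (y - x)
  have hK : IsCompact K := hψ_supp.comp_homeomorph (Homeomorph.subRight x)
  obtain ⟨δ, hδ, hδΩ⟩ := hK.exists_cthickening_subset_open hΩ hψΩ
  set S := cthickening δ K
  have hf_int : IntegrableOn f S μ := hf.integrableOn_compact_subset hδΩ hK.cthickening
  have hfS : LocallyIntegrable (S.indicator f) μ :=
    (hf_int.integrable_indicator isClosed_cthickening.measurableSet).locallyIntegrable
  have hcongr {g : V → ℝ} (hg : Function.support g ⊆ S) :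
      ∫ y, S.indicator f y * g y ∂μ = ∫ y, f y * g y ∂μ := by
    congr with y
    rw [← Set.indicator_mul_left, Set.indicator_eq_self.2
      ((Function.support_mul_subset_right _ _).trans hg)]
  have hfderiv_supp : Function.support (fun y ↦ fderiv ℝ ψ (y - x) v) ⊆ S := by
    simp_rw [← fderiv_comp_sub]
    exact (subset_tsupport _).trans
      ((tsupport_fderiv_apply_subset ℝ v).trans (self_subset_cthickening K))
  have hψ_near : ∀ᶠ x' in 𝓝 x, Function.support (fun y ↦ ψ (y - x')) ⊆ S := by
    filter_upwards [closedBall_mem_nhds x hδ] with x' hx' y hy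
    refine mem_cthickening_of_dist_le y (y - x' + x) δ K (subset_tsupport _ (by simpa using hy)) ?_
    have hshift : y - (y - x' + x) = x' - x := by abel
    rwa [dist_eq_norm, hshift, ← dist_eq_norm]
  have hderiv := hasLineDerivAt_integral_mul_comp_sub hfS hψ hψ_supp x v
  rw [hcongr hfderiv_supp] at hderiv
  exact hderiv.congr_of_eventuallyEq (hψ_near.mono fun x' hx' ↦ (hcongr hx').symm)

end Integration

section StressEnergy

variable {V F ι : Type*} [NormedAddCommGroup V] [InnerProductSpace ℝ V]
  [NormedAddCommGroup F] [InnerProductSpace ℝ F] [Fintype ι]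
  {u : V → F} {y : V}

/-- The squared Frobenius norm `|∇u(y)|²`, computed in the orthonormal basis `b`;
in the standard basis of `E4` it is `gradSq u y`. -/
def gradNormSq (b : OrthonormalBasis ι ℝ V) (u : V → F) (y : V) : ℝ :=
  ∑ i, ‖fderiv ℝ u y (b i)‖ ^ 2

lemma hasFDerivAt_fderiv_apply (hu : ContDiffAt ℝ 2 u y) (w : V) :
    HasFDerivAt (fun z ↦ fderiv ℝ u z w) ((fderiv ℝ (fderiv ℝ u) y).flip w) y := by
  have hDu := ((hu.fderiv_right (m := 1) le_rfl).differentiableAt one_ne_zero).hasFDerivAt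
  simpa using hDu.clm_apply (hasFDerivAt_const w y)

lemma contDiffAt_fderiv_apply (hu : ContDiffAt ℝ 2 u y) (w : V) :
    ContDiffAt ℝ 1 (fun z ↦ fderiv ℝ u z w) y :=
  (hu.fderiv_right le_rfl).clm_apply contDiffAt_const

lemma contDiffAt_gradNormSq (b : OrthonormalBasis ι ℝ V) (hu : ContDiffAt ℝ 2 u y) :
    ContDiffAt ℝ 1 (gradNormSq b u) y :=
  ContDiffAt.sum fun i _ ↦ (contDiffAt_fderiv_apply hu (b i)).norm_sq ℝ

lemma fderiv_gradNormSq (b : OrthonormalBasis ι ℝ V) (hu : ContDiffAt ℝ 2 u y) (v : V) :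
    fderiv ℝ (gradNormSq b u) y v =
      2 * ∑ i, ⟪fderiv ℝ u y (b i), fderiv ℝ (fderiv ℝ u) y v (b i)⟫ := by
  have hderiv : HasFDerivAt (gradNormSq b u) _ y :=
    HasFDerivAt.fun_sum fun i _ ↦ (hasFDerivAt_fderiv_apply hu (b i)).norm_sq
  simp [hderiv.fderiv, Finset.mul_sum]

variable [FiniteDimensional ℝ V]

lemma fderiv_gradNormSq_eq_two_mul_sum (b : OrthonormalBasis ι ℝ V) (hu : HarmonicAt u y) (v : V) :
    fderiv ℝ (gradNormSq b u) y v =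
      2 * ∑ i, fderiv ℝ (fun z ↦ ⟪fderiv ℝ u z (b i), fderiv ℝ u z v⟫) y (b i) := by
  have hsymm : IsSymmSndFDerivAt ℝ u y := hu.1.isSymmSndFDerivAt (by simp)
  have hlap : ∑ i, fderiv ℝ (fderiv ℝ u) y (b i) (b i) = 0 := by
    simpa [laplacian_eq_iteratedFDeriv_orthonormalBasis u b, iteratedFDeriv_two_apply]
      using hu.2.self_of_nhds
  have hflux (i : ι) : fderiv ℝ (fun z ↦ ⟪fderiv ℝ u z (b i), fderiv ℝ u z v⟫) y (b i) =
      ⟪fderiv ℝ u y (b i), fderiv ℝ (fderiv ℝ u) y v (b i)⟫ +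
        ⟪fderiv ℝ (fderiv ℝ u) y (b i) (b i), fderiv ℝ u y v⟫ := by
    rw [((hasFDerivAt_fderiv_apply hu.1 (b i)).inner ℝ (hasFDerivAt_fderiv_apply hu.1 v)).fderiv]
    simp [hsymm.eq v (b i)]
  simp only [fderiv_gradNormSq b hu.1, hflux, Finset.sum_add_distrib, ← sum_inner, hlap,
    inner_zero_left, add_zero]

lemma sum_inner_fderiv_mul_fderiv (b : OrthonormalBasis ι ℝ V) (Ψ : V → ℝ) (v : V) :
    ∑ i, ⟪fderiv ℝ u y (b i), fderiv ℝ u y v⟫ * fderiv ℝ Ψ y (b i) =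
      ⟪fderiv ℝ u y (∇ Ψ y), fderiv ℝ u y v⟫ := by
  conv_rhs => rw [← b.sum_repr' (∇ Ψ y)]
  simp [sum_inner, inner_smul_left, inner_gradient_right, mul_comm]

variable [MeasurableSpace V] [BorelSpace V] {μ : Measure V} [μ.IsAddHaarMeasure]

lemma integral_gradNormSq_mul_fderiv (b : OrthonormalBasis ι ℝ V) {Ψ : V → ℝ}
    (hΨ : ContDiff ℝ 1 Ψ) (hΨ_supp : HasCompactSupport Ψ) (hu : HarmonicOnNhd u (tsupport Ψ))
    (v : V) :
    ∫ y, gradNormSq b u y * fderiv ℝ Ψ y v ∂μ =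
      2 * ∫ y, ⟪fderiv ℝ u y (∇ Ψ y), fderiv ℝ u y v⟫ ∂μ := by
  set T : ι → V → ℝ := fun i y ↦ ⟪fderiv ℝ u y (b i), fderiv ℝ u y v⟫ with hT_def
  have hT (i : ι) (y : V) (hy : y ∈ tsupport Ψ) : ContDiffAt ℝ 1 (T i) y :=
    (contDiffAt_fderiv_apply (hu y hy).1 (b i)).inner ℝ (contDiffAt_fderiv_apply (hu y hy).1 v)
  have hdensity (y : V) : fderiv ℝ (gradNormSq b u) y v * Ψ y =
      2 * ∑ i, fderiv ℝ (T i) y (b i) * Ψ y := by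
    by_cases hy : y ∈ tsupport Ψ
    · rw [fderiv_gradNormSq_eq_two_mul_sum b (hu y hy), mul_assoc, Finset.sum_mul]
    · simp [image_eq_zero_of_notMem_tsupport hy]
  calc ∫ y, gradNormSq b u y * fderiv ℝ Ψ y v ∂μ
      = -∫ y, fderiv ℝ (gradNormSq b u) y v * Ψ y ∂μ :=
        integral_mul_fderiv_eq_neg_of_hasCompactSupport hΨ hΨ_supp
          (fun y hy ↦ contDiffAt_gradNormSq b (hu y hy).1) v
    _ = 2 * ∑ i, -∫ y, fderiv ℝ (T i) y (b i) * Ψ y ∂μ := by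
        simp_rw [hdensity, integral_const_mul]
        rw [integral_finsetSum _ fun i _ ↦ integrable_fderiv_mul_of_hasCompactSupport hΨ.continuous
          hΨ_supp (hT i) (b i), Finset.sum_neg_distrib, mul_neg]
    _ = 2 * ∑ i, ∫ y, T i y * fderiv ℝ Ψ y (b i) ∂μ := by
        simp_rw [integral_mul_fderiv_eq_neg_of_hasCompactSupport hΨ hΨ_supp (hT _)]
    _ = 2 * ∫ y, ⟪fderiv ℝ u y (∇ Ψ y), fderiv ℝ u y v⟫ ∂μ := by
        rw [← integral_finsetSum _ fun i _ ↦ integrable_mul_fderiv_of_hasCompactSupport hΨ hΨ_supp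
          (fun y hy ↦ (hT i y hy).continuousAt.continuousWithinAt) (b i)]
        simp_rw [hT_def, sum_inner_fderiv_mul_fderiv]

lemma hasLineDerivAt_integral_gradNormSq_mul (b : OrthonormalBasis ι ℝ V) {ψ : V → ℝ} {x : V}
    (hψ : ContDiff ℝ 1 ψ) (hψ_supp : HasCompactSupport ψ)
    (hu : HarmonicOnNhd u (tsupport fun y ↦ ψ (y - x))) (v : V) :
    HasLineDerivAt ℝ (fun x' ↦ ∫ y, gradNormSq b u y * ψ (y - x') ∂μ)
      (-(2 * ∫ y, ⟪fderiv ℝ u y (∇ ψ (y - x)), fderiv ℝ u y v⟫ ∂μ)) x v := by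
  have hcont : ContinuousOn (gradNormSq b u) {y | HarmonicAt u y} := fun y hy ↦
    (contDiffAt_gradNormSq b hy.1).continuousAt.continuousWithinAt
  have hΩ := isOpen_setOfPred_harmonicAt u
  have hgrad (y : V) : ∇ (fun z ↦ ψ (z - x)) y = ∇ ψ (y - x) := by
    simp only [gradient, fderiv_comp_sub]
  have hidentity := integral_gradNormSq_mul_fderiv (μ := μ) b (Ψ := fun y ↦ ψ (y - x))
    (hψ.comp (contDiff_id.sub contDiff_const))
    (hψ_supp.comp_homeomorph (Homeomorph.subRight x)) hu v
  simp only [hgrad, fderiv_comp_sub] at hidentity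
  rw [← hidentity]
  exact hasLineDerivAt_integral_mul_comp_sub_of_locallyIntegrableOn hΩ
    (hcont.locallyIntegrableOn hΩ.measurableSet) hψ hψ_supp hu v

theorem stmt_9_general (b : OrthonormalBasis ι ℝ V) {φ : ℝ → ℝ} (hφ : ContDiff ℝ 1 φ)
    (hφ' : deriv φ 0 = 0) (hφ0 : ∀ t, 1 ≤ t → φ t = 0) {x : V} {r : ℝ} (hr : 0 < r)
    (hu : HarmonicOnNhd u (closedBall x r)) (v : V) :
    HasLineDerivAt ℝ (fun x' ↦ ∫ y, gradNormSq b u y * φ (‖y - x'‖ / r) ∂μ)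
      (-(2 / r) * ∫ y, deriv φ (‖y - x‖ / r) *
        ⟪fderiv ℝ u y (‖y - x‖⁻¹ • (y - x)), fderiv ℝ u y v⟫ ∂μ) x v := by
  set η : ℝ → ℝ := fun t ↦ φ (t / r) with hη_def
  have hη : ContDiff ℝ 1 η := hφ.comp (contDiff_id.div_const r)
  have hη_deriv (t : ℝ) : deriv η t = r⁻¹ * deriv φ (t / r) := by
    simpa [hη_def, div_eq_inv_mul] using deriv_comp_mul_left r⁻¹ φ t
  have hη₀ : deriv η 0 = 0 := by simp [hη_deriv, hφ']
  have hη_supp (x : V) : Function.support (fun y ↦ η ‖y - x‖) ⊆ closedBall x r := fun y hy ↦ by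
    contrapose! hy
    rw [mem_closedBall, dist_eq_norm, not_le] at hy
    simpa [hη_def] using hφ0 _ ((one_le_div hr).2 hy.le)
  have hψ_supp : HasCompactSupport fun z : V ↦ η ‖z‖ :=
    .of_support_subset_isCompact (isCompact_closedBall 0 r) (by simpa using hη_supp 0)
  have hderiv := hasLineDerivAt_integral_gradNormSq_mul (μ := μ) b (contDiff_one_comp_norm hη hη₀)
    hψ_supp (fun y hy ↦ hu y (closure_minimal (hη_supp x) isClosed_closedBall hy)) v
  refine HasDerivAt.congr_deriv hderiv ?_
  have hgrad := gradient_eq (hasGradientAt_comp_norm (V := V) (hη.differentiable one_ne_zero) hη₀)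
  rw [hgrad, ← integral_const_mul, ← integral_const_mul, ← integral_neg]
  congr with y
  simp only [map_smul, real_inner_smul_left, hη_deriv]
  ring

end StressEnergy

section EuclideanFour

variable {F : Type*} [NormedAddCommGroup F] [InnerProductSpace ℝ F]

lemma IsHarmonicOn.harmonicOnNhd {u : E4 → F} {Ω : Set E4} (hu : IsHarmonicOn u Ω)
    (hΩ : IsOpen Ω) : HarmonicOnNhd u Ω := fun x hx ↦ by
  refine ⟨((hu.1.contDiffAt (hΩ.mem_nhds hx)).of_le (by norm_cast)), ?_⟩
  filter_upwards [hΩ.mem_nhds hx] with y hy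
  rw [laplacian_eq_iteratedFDeriv_orthonormalBasis u (EuclideanSpace.basisFun (Fin 4) ℝ)]
  simpa using hu.2 y hy

lemma gradSq_eq_gradNormSq (u : E4 → F) :
    gradSq u = gradNormSq (EuclideanSpace.basisFun (Fin 4) ℝ) u := by
  ext y
  simp [gradSq, gradNormSq]

end EuclideanFour

/-- Flat-case identity (4.3):
`∂_v D_φ(x,r) = −(2/r) ∫ φ'(|y−x|/r) ⟨∂_{ν_x}u(y), ∂_v u(y)⟩ dy`. -/
theorem stmt_9 (φ : ℝ → ℝ) (hφs : ContDiff ℝ (⊤ : ℕ∞) φ) (hφa : Antitone φ)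
    (hφ1 : ∀ t ≤ (3/4 : ℝ), φ t = 1) (hφ0 : ∀ t, (1:ℝ) ≤ t → φ t = 0)
    (Ω : Set E4) (hΩ : IsOpen Ω) (u : E4 → E) (hu : IsHarmonicOn u Ω)
    (v : E4) (x : E4) (r : ℝ) (hr : 0 < r)
    (hball : ∀ᶠ x' in nhds x, closedBall x' r ⊆ Ω) :
    HasDerivAt (fun t : ℝ => Dphi φ u (x + t • v) r)
      (-(2 / r) * ∫ y, deriv φ (‖y - x‖ / r) *
        ⟪fderiv ℝ u y (‖y - x‖⁻¹ • (y - x)), fderiv ℝ u y v⟫) 0 := by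
  have hφ' : deriv φ 0 = 0 := by
    have hφ_const : φ =ᶠ[𝓝 0] fun _ ↦ 1 := (eventually_le_nhds (by norm_num)).mono hφ1
    simp [hφ_const.deriv_eq]
  simp only [Dphi, gradSq_eq_gradNormSq]
  exact stmt_9_general _ (hφs.of_le (by norm_cast)) hφ' hφ0 hr
    (fun y hy ↦ hu.harmonicOnNhd hΩ y (hball.self_of_nhds hy)) v
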